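/- arXiv:0803.0667 — 2 statements merged into one kernel-verified Lean document; each statement's English description precedes it below -/
import Mathlib

section
/- Let λ ∈ ℝ and s₀ > 0, and set a := e^{−πλ²/2}. There exists b ∈ ℂ with a² + |b|² = 1 such that the following holds. Let (u^ε)_{ε∈(0,1]} be any family of C¹ solutions u^ε : [−s₀, s₀] → ℂ² of the Landau–Zener system (ε/i) (u^ε)'(s) = M(s) u^ε(s), where M(s) is the 2×2 real symmetric matrix with entries M₁₁ = s, M₁₂ = M₂₁ = √ε·λ, M₂₂ = −s, and assume sup_{ε} ‖u^ε(−s₀)‖ ≤ 1. Then there exist vectors α^ε = (α₁^ε, α₂^ε) ∈ ℂ² and ω^ε = (ω₁^ε, ω₂^ε) ∈ ℂ² related by ω₁^ε = a α₁^ε − conj(b) α₂^ε and ω₂^ε = b α₁^ε + a α₂^ε, such that for every δ ∈ (0, s₀]: sup_{s∈[−s₀,−δ]} ( |u₁^ε(s) − e^{i s²/(2ε)} e^{i (λ²/2) log(|s|/√ε)} α₁^ε| + |u₂^ε(s) − e^{−i s²/(2ε)} e^{−i (λ²/2) log(|s|/√ε)} α₂^ε| ) → 0 as ε → 0, and sup_{s∈[δ,s₀]}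 ( |u₁^ε(s) − e^{i s²/(2ε)} e^{i (λ²/2) log(|s|/√ε)} ω₁^ε| + |u₂^ε(s) − e^{−i s²/(2ε)} e^{−i (λ²/2) log(|s|/√ε)} ω₂^ε| ) → 0 as ε → 0. -/
/-!
In the rescaled time `t = s / √ε` and in rotating coordinates `x = e^{-it²/2} v₁`,
`y = e^{it²/2} v₂` the system no longer contains `ε`:
`x' = iλ e^{-it²} y`, `y' = iλ e^{it²} x` (`IsLZ`, `isLZ_rescale`). Hence one connection problem for
this fixed system has to be solved, with an explicit rate of convergence `O(1/|t|)`; at `|s| ≥ δ`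
the rate becomes `O(√ε / δ)`.

**Reduction to one amplitude.** The power series of the solution with data `(1, 0)` at `t = 0` gives
`x` even and `y` odd (`exists_isLZ`). The coupling is anti-Hermitian and commutes with
`(x, y) ↦ (-conj y, conj x)`, so `‖x‖² + ‖y‖² = 1` and every solution is
`A (x, y) + B (-conj y, conj x)` (`IsLZ.repr`). Adding the oscillating correction `λ e^{-it²} y / (2t)`
to `x` turns the equation for `x` into `iλ²/(2t) x` plus a term `O(t⁻²)`, so that
`x = t^{iλ²/2} p + O(1/t)`, and similarly `y = t^{-iλ²/2} q + O(1/t)` (`IsLZ.asymptotics`). With the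
parity of `x` and `y`, the outgoing amplitudes are `(A p - B conj q, A q + B conj p)` and the incoming
ones `(A p + B conj q, -A q + B conj p)`. The transfer matrix therefore has diagonal entry
`‖p‖² - ‖q‖²` and `b = 2 conj p q`, and `a² + ‖b‖² = (‖p‖² + ‖q‖²)² = 1`. It remains to prove that
`‖p‖² - ‖q‖² = e^{-πλ²/2}`, that is `2 ‖p‖² = 1 + e^{-πλ²/2}`.

**The modulus of `p`.** No parabolic cylinder functions are needed: the second-order equation
`x'' + 2it x' + λ² x = 0` shows by an integration by parts that the Gaussian average
`g(h) = ∫₀^∞ e^{-s²} x(hs) ds` satisfies the first-order equation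
`g' = -(λ²/2) h / (1 + ih²) g` (`gaussAvg_hasDerivAt`), whence
`‖g(h)‖² = (π/4) e^{-(λ²/2) arctan h²}` (`gaussAvg_normSq`). As `h → ∞` the asymptotics of `x` and
dominated convergence give `‖g(h)‖ → ‖p‖ ‖Γ(1/2 + iλ²/4)‖ / 2`, and the reflection formula
`‖Γ(1/2 + ic)‖² = π / cosh (πc)` determines `‖p‖` (`IsLZ.amplitude`).
-/


open MeasureTheory Filter Complex Set
open scoped ENNReal

noncomputable section

/-- The oscillatory phase `e^{i s²/(2ε)} (|s|/√ε)^{i λ²/2}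
  = e^{i s²/(2ε)} e^{i (λ²/2) log(|s|/√ε)}`. -/
noncomputable def lzPhase (lam ε s : ℝ) : ℂ :=
  Complex.exp (Complex.I * ((s ^ 2 / (2 * ε) : ℝ) : ℂ)) *
    Complex.exp (Complex.I * ((lam ^ 2 / 2 * Real.log (|s| / Real.sqrt ε) : ℝ) : ℂ))

/-- The Landau–Zener system in rotating coordinates and in the rescaled time `t = s / √ε`:
`x = e^{-it²/2} v₁`, `y = e^{it²/2} v₂`, so that only the oscillating coupling is left. -/
def IsLZ (lam : ℝ) (S : Set ℝ) (x y : ℝ → ℂ) : Prop :=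
  ∀ t ∈ S, HasDerivAt x (I * lam * cexp (-(I * (t : ℂ) ^ 2)) * y t) t ∧
    HasDerivAt y (I * lam * cexp (I * (t : ℂ) ^ 2) * x t) t

/-! ### The fundamental solution -/

lemma series_bound (c : ℕ → ℂ) (M C : ℝ) (hC : 0 ≤ C) (hM : 0 ≤ M)
    (hc : ∀ n, ‖c n‖ ≤ M * C ^ n / n.factorial) (R τ : ℝ) (h : |τ| ≤ R) (n : ℕ) :
    ‖((n + 1 : ℕ) : ℂ) * c (n + 1) * (τ : ℂ) ^ n‖ ≤ M * C * ((C * R) ^ n / n.factorial) := by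
  have hR : 0 ≤ R := (abs_nonneg _).trans h
  have h1 := hc (n + 1)
  rw [norm_mul, norm_mul, norm_pow, Complex.norm_natCast, Complex.norm_real, Real.norm_eq_abs]
  calc ((n + 1 : ℕ) : ℝ) * ‖c (n + 1)‖ * |τ| ^ n
      ≤ ((n + 1 : ℕ) : ℝ) * (M * C ^ (n + 1) / (n + 1).factorial) * R ^ n := by gcongr
    _ = M * C * ((C * R) ^ n / n.factorial) := by
        rw [Nat.factorial_succ]
        have : (n.factorial : ℝ) ≠ 0 := by positivity
        push_cast
        field_simp
        ring

lemma series_hasSum (c : ℕ → ℂ) (M C : ℝ)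
    (hc : ∀ n, ‖c n‖ ≤ M * C ^ n / n.factorial) (τ : ℝ) :
    Summable fun n => c n * (τ : ℂ) ^ n := by
  refine Summable.of_norm_bounded (g := fun n => M * ((C * |τ|) ^ n / n.factorial))
    ((Real.summable_pow_div_factorial _).mul_left _) fun n => ?_
  rw [norm_mul, norm_pow, Complex.norm_real, Real.norm_eq_abs]
  calc ‖c n‖ * |τ| ^ n ≤ M * C ^ n / n.factorial * |τ| ^ n := by gcongr; exact hc n
    _ = _ := by rw [mul_pow]; ring

lemma series_hasDerivAt (c : ℕ → ℂ) (M C : ℝ) (hC : 0 ≤ C) (hM : 0 ≤ M)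
    (hc : ∀ n, ‖c n‖ ≤ M * C ^ n / n.factorial) (τ : ℝ) :
    Summable (fun n : ℕ => ((n + 1 : ℕ) : ℂ) * c (n + 1) * (τ : ℂ) ^ n) ∧
    HasDerivAt (fun τ : ℝ => ∑' n, c n * (τ : ℂ) ^ n)
      (∑' n : ℕ, ((n + 1 : ℕ) : ℂ) * c (n + 1) * (τ : ℂ) ^ n) τ := by
  have hsum : ∀ R : ℝ, Summable fun n : ℕ => M * C * ((C * R) ^ n / n.factorial) := fun R =>
    (Real.summable_pow_div_factorial _).mul_left _
  refine ⟨Summable.of_norm_bounded (hsum |τ|)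
    (series_bound c M C hC hM hc |τ| τ le_rfl), ?_⟩
  have hfun : (fun τ : ℝ => ∑' n, c n * (τ : ℂ) ^ n) =
      fun τ : ℝ => c 0 + ∑' n, c (n + 1) * (τ : ℂ) ^ (n + 1) := by
    ext τ
    rw [(series_hasSum c M C hc τ).tsum_eq_zero_add]
    simp
  rw [hfun]
  refine HasDerivAt.const_add _ ?_
  refine hasDerivAt_tsum_of_isPreconnected
    (g := fun (n : ℕ) (z : ℝ) => c (n + 1) * (z : ℂ) ^ (n + 1))
    (g' := fun (n : ℕ) (z : ℝ) => ((n + 1 : ℕ) : ℂ) * c (n + 1) * (z : ℂ) ^ n)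
    (hsum (|τ| + 1)) (t := Metric.ball (0 : ℝ) (|τ| + 1))
    (y₀ := (0 : ℝ)) Metric.isOpen_ball (convex_ball _ _).isPreconnected ?_ ?_ ?_ ?_ ?_
  · intro n y _
    have h := ((hasDerivAt_pow (n + 1) (y : ℂ)).const_mul (c (n + 1))).comp_ofReal
    convert! h using 1
    simp; ring
  · intro n y hy
    refine series_bound c M C hC hM hc _ y ?_ n
    simpa using (mem_ball_zero_iff.1 hy).le
  · simp; positivity
  · simp
  · simp

/-- Coefficients of the odd component: `e^{-it²} y(t) = t ∑ Gₙ t²ⁿ`. -/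
def lzG (lam : ℝ) : ℕ → ℂ
  | 0 => I * lam
  | n + 1 => -((lam : ℂ) ^ 2 / (2 * (n + 1)) + 2 * I) / (2 * n + 3) * lzG lam n

/-- Coefficients of the even component: `x(t) = ∑ Fₙ t²ⁿ`. -/
def lzF (lam : ℝ) : ℕ → ℂ
  | 0 => 1
  | n + 1 => I * lam * lzG lam n / (2 * (n + 1))

lemma lzG_bound (lam : ℝ) (n : ℕ) :
    ‖lzG lam n‖ ≤ |lam| * (lam ^ 2 + 2) ^ n / n.factorial := by
  induction n with
  | zero => simp [lzG]
  | succ n ih =>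
    rw [lzG, norm_mul, norm_div, norm_neg]
    have h1 : ‖(lam : ℂ) ^ 2 / (2 * (n + 1)) + 2 * I‖ ≤ lam ^ 2 + 2 := by
      refine (norm_add_le _ _).trans ?_
      gcongr
      · rw [norm_div, norm_pow, Complex.norm_real, Real.norm_eq_abs, sq_abs]
        have : ‖(2 * ((n : ℂ) + 1))‖ = 2 * ((n : ℝ) + 1) := by
          rw [show (2 * ((n : ℂ) + 1)) = ((2 * ((n : ℝ) + 1) : ℝ) : ℂ) by push_cast; ring,
            Complex.norm_real, Real.norm_of_nonneg (by positivity)]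
        rw [this]
        exact div_le_self (sq_nonneg _) (by linarith [(Nat.cast_nonneg n : (0 : ℝ) ≤ n)])
      · simp
    have h2 : ‖(2 * (n : ℂ) + 3)‖ = 2 * (n : ℝ) + 3 := by
      rw [show (2 * (n : ℂ) + 3) = ((2 * (n : ℝ) + 3 : ℝ) : ℂ) by push_cast; ring,
        Complex.norm_real, Real.norm_of_nonneg (by positivity)]
    rw [h2]
    calc _ ≤ (lam ^ 2 + 2) / ((n : ℝ) + 1) * (|lam| * (lam ^ 2 + 2) ^ n / n.factorial) := by
            gcongr
            · linarith [(Nat.cast_nonneg n : (0 : ℝ) ≤ n)]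
            · norm_num
      _ = _ := by
        rw [Nat.factorial_succ]
        have : (n.factorial : ℝ) ≠ 0 := by positivity
        push_cast
        field_simp
        ring

lemma lzF_bound (lam : ℝ) (n : ℕ) :
    ‖lzF lam n‖ ≤ 1 * (lam ^ 2 + 2) ^ n / n.factorial := by
  cases n with
  | zero => simp [lzF]
  | succ n =>
    have h := lzG_bound lam n
    have h2 : ‖(2 * ((n : ℂ) + 1))‖ = 2 * ((n : ℝ) + 1) := by
      rw [show (2 * ((n : ℂ) + 1)) = ((2 * ((n : ℝ) + 1) : ℝ) : ℂ) by push_cast; ring,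
        Complex.norm_real, Real.norm_of_nonneg (by positivity)]
    rw [lzF, norm_div, h2, norm_mul, norm_mul, Complex.norm_I, Complex.norm_real,
      Real.norm_eq_abs, one_mul, one_mul]
    calc |lam| * ‖lzG lam n‖ / (2 * ((n : ℝ) + 1))
        ≤ |lam| * (|lam| * (lam ^ 2 + 2) ^ n / n.factorial) / (1 * ((n : ℝ) + 1)) := by
          gcongr; norm_num
      _ = lam ^ 2 * (lam ^ 2 + 2) ^ n / (n + 1).factorial := by
        rw [Nat.factorial_succ, ← sq_abs lam]
        have : (n.factorial : ℝ) ≠ 0 := by positivity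
        push_cast
        field_simp
      _ ≤ _ := by
        rw [pow_succ' (lam ^ 2 + 2)]
        gcongr
        linarith

/-- A fundamental solution: the power series above solve the system, with `x` even, `y` odd. -/
lemma exists_isLZ (lam : ℝ) : ∃ x y : ℝ → ℂ, IsLZ lam univ x y ∧ x 0 = 1 ∧ y 0 = 0 ∧
    (∀ t, x (-t) = x t) ∧ (∀ t, y (-t) = -y t) := by
  have hC : 0 ≤ lam ^ 2 + 2 := by positivity
  set F : ℝ → ℂ := fun τ => ∑' n, lzF lam n * (τ : ℂ) ^ n with hF
  set G : ℝ → ℂ := fun τ => ∑' n, lzG lam n * (τ : ℂ) ^ n with hG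
  have sF := series_hasSum _ _ _ (lzF_bound lam)
  have sG := series_hasSum _ _ _ (lzG_bound lam)
  have dF := series_hasDerivAt _ _ _ hC zero_le_one (lzF_bound lam)
  have dG := series_hasDerivAt _ _ _ hC (abs_nonneg _) (lzG_bound lam)
  set G' : ℝ → ℂ := fun τ => ∑' n : ℕ, ((n + 1 : ℕ) : ℂ) * lzG lam (n + 1) * (τ : ℂ) ^ n with hG'
  have e1 : ∀ τ : ℝ, (∑' n : ℕ, ((n + 1 : ℕ) : ℂ) * lzF lam (n + 1) * (τ : ℂ) ^ n)
      = I * lam / 2 * G τ := by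
    intro τ
    rw [hG, ← tsum_mul_left]
    congr 1
    ext n
    have : (n : ℂ) + 1 ≠ 0 := Nat.cast_add_one_ne_zero n
    rw [lzF]
    push_cast
    field_simp
  have shift : ∀ (c : ℕ → ℂ) (τ : ℝ), Summable (fun n => c n * (τ : ℂ) ^ n) →
      ∃ S, HasSum (fun n => (τ : ℂ) * (c (n + 1) * (τ : ℂ) ^ n)) S ∧
        ∑' n, c n * (τ : ℂ) ^ n = c 0 + S := by
    intro c τ h
    refine ⟨∑' n, c (n + 1) * (τ : ℂ) ^ (n + 1), ?_, ?_⟩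
    · have := ((summable_nat_add_iff 1).2 h).hasSum
      convert! this using 2
      ring
    · rw [h.tsum_eq_zero_add]; simp
  -- In the variable `τ = t²` the system reads `F' = (iλ/2) G`, `G + 2τG' = iλF - 2iτG`.
  have e2 : ∀ τ : ℝ, G τ + 2 * τ * G' τ = I * lam * F τ - 2 * I * τ * G τ := by
    intro τ
    obtain ⟨SF, hSF, eF⟩ := shift _ τ (sF τ)
    obtain ⟨SG, hSG, eG⟩ := shift _ τ (sG τ)
    have h1 := hSG.add ((dG τ).1.hasSum.mul_left (2 * (τ : ℂ)))
    have h2 := (hSF.mul_left (I * lam)).sub ((sG τ).hasSum.mul_left (2 * I * (τ : ℂ)))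
    have h3 : SG + 2 * τ * G' τ = I * lam * SF - 2 * I * τ * G τ := by
      refine HasSum.unique h1 ?_
      convert! h2 using 2 with n
      have h4 : (n : ℂ) + 1 ≠ 0 := Nat.cast_add_one_ne_zero n
      have h5 : (2 * (n : ℂ) + 3) ≠ 0 := by
        have : ((2 * n + 3 : ℕ) : ℂ) ≠ 0 := Nat.cast_ne_zero.2 (by omega)
        push_cast at this; exact this
      rw [lzF, lzG]
      push_cast
      field_simp
      linear_combination (lam : ℂ) ^ 2 * lzG lam n * (-(2 * n + 3)) * (τ : ℂ) * (τ : ℂ) ^ n * I_sq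
    have h6 : F τ = 1 + SF := eF
    have h7 : G τ = I * lam + SG := eG
    linear_combination h3 + h7 - I * lam * h6
  have dsq : ∀ t : ℝ, HasDerivAt (fun t : ℝ => t ^ 2) (2 * t) t := fun t => by
    simpa using hasDerivAt_pow 2 t
  refine ⟨fun t => F (t ^ 2), fun t => cexp (I * (t : ℂ) ^ 2) * (t * G (t ^ 2)), ?_, ?_, ?_,
    ?_, ?_⟩
  · intro t _
    have hx := HasDerivAt.scomp (h := fun t : ℝ => t ^ 2) t (dF (t ^ 2)).2 (dsq t)
    have hg := HasDerivAt.scomp (h := fun t : ℝ => t ^ 2) t (dG (t ^ 2)).2 (dsq t)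
    have hid : HasDerivAt (fun t : ℝ => (t : ℂ)) 1 t := (hasDerivAt_id (t : ℂ)).comp_ofReal
    have hg' : HasDerivAt (fun t => G (t ^ 2)) ((2 * t) • G' (t ^ 2)) t := hg
    have he : HasDerivAt (fun t : ℝ => cexp (I * (t : ℂ) ^ 2))
        (cexp (I * (t : ℂ) ^ 2) * (I * (2 * t))) t := by
      convert! ((hid.pow 2).const_mul I).cexp using 1
      simp
    constructor
    · convert! hx using 1
      have : cexp (-(I * (t : ℂ) ^ 2)) * cexp (I * (t : ℂ) ^ 2) = 1 := by
        rw [← Complex.exp_add]; simp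
      rw [e1, real_smul]
      push_cast
      linear_combination I * lam * t * G (t ^ 2) * this
    · convert! he.mul (hid.mul hg') using 1
      have := e2 (t ^ 2)
      rw [real_smul, Pi.mul_apply]
      push_cast at this ⊢
      linear_combination - cexp (I * (t : ℂ) ^ 2) * this
  · simp only [hF]
    rw [tsum_eq_single 0]
    · simp [lzF]
    · intro n hn; simp [hn]
  · simp
  · intro t; simp
  · intro t; simp

open scoped ComplexConjugate

/-! ### Symmetry and conservation laws -/

lemma hasDerivAt_conj {f : ℝ → ℂ} {f' : ℂ} {t : ℝ} (h : HasDerivAt f f' t) :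
    HasDerivAt (fun t => conj (f t)) (conj f') t := h.star

lemma conj_exp_phase (t : ℝ) : conj (cexp (I * (t : ℂ) ^ 2)) = cexp (-(I * (t : ℂ) ^ 2)) := by
  rw [← Complex.exp_conj]; simp

lemma conj_exp_phase' (t : ℝ) : conj (cexp (-(I * (t : ℂ) ^ 2))) = cexp (I * (t : ℂ) ^ 2) := by
  rw [← Complex.exp_conj]; simp

lemma norm_exp_phase (t : ℝ) : ‖cexp (-(I * (t : ℂ) ^ 2))‖ = 1 := by
  rw [show -(I * (t : ℂ) ^ 2) = ((-t ^ 2 : ℝ) : ℂ) * I by push_cast; ring,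
    Complex.norm_exp_ofReal_mul_I]

/-- The SU(2) symmetry of the system. -/
lemma IsLZ.swap {lam : ℝ} {S : Set ℝ} {x y : ℝ → ℂ} (h : IsLZ lam S x y) :
    IsLZ lam S (fun t => -conj (y t)) (fun t => conj (x t)) := by
  intro t ht
  obtain ⟨h1, h2⟩ := h t ht
  constructor
  · convert! (hasDerivAt_conj h2).neg using 1
    simp only [map_mul, conj_exp_phase, conj_I, conj_ofReal]
    ring
  · convert! hasDerivAt_conj h1 using 1
    simp only [map_mul, conj_exp_phase', conj_I, conj_ofReal]
    ring

/-- The Hermitian pairing of two solutions is conserved, because the coupling is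
anti-Hermitian. -/
lemma IsLZ.pairing {lam : ℝ} {x y f g : ℝ → ℂ} {a b : ℝ}
    (h : IsLZ lam (Icc a b) x y) (hfg : IsLZ lam (Icc a b) f g) :
    ∀ t ∈ Icc a b, conj (x t) * f t + conj (y t) * g t =
      conj (x a) * f a + conj (y a) * g a := by
  have key : ∀ t ∈ Icc a b, HasDerivAt (fun t => conj (x t) * f t + conj (y t) * g t) 0 t := by
    intro t ht
    obtain ⟨h1, h2⟩ := h t ht
    obtain ⟨h3, h4⟩ := hfg t ht
    convert! ((hasDerivAt_conj h1).mul h3).add ((hasDerivAt_conj h2).mul h4) using 1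
    simp only [map_mul, conj_exp_phase, conj_exp_phase', conj_I, conj_ofReal]
    ring
  exact constant_of_has_deriv_right_zero
    (fun t ht => (key t ht).continuousAt.continuousWithinAt)
    (fun t ht => (key t (Ico_subset_Icc_self ht)).hasDerivWithinAt)

lemma IsLZ.mono {lam : ℝ} {S S' : Set ℝ} {x y : ℝ → ℂ} (h : IsLZ lam S x y) (hS : S' ⊆ S) :
    IsLZ lam S' x y := fun t ht => h t (hS ht)

lemma IsLZ.normSq {lam : ℝ} {x y : ℝ → ℂ} (h : IsLZ lam univ x y) (hx : x 0 = 1) (hy : y 0 = 0)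
    (t : ℝ) : conj (x t) * x t + conj (y t) * y t = 1 := by
  have H := (h.mono (subset_univ (Icc (-|t|) |t|))).pairing (h.mono (subset_univ _))
  rw [H t ⟨neg_abs_le t, le_abs_self t⟩, ← H 0 (by simp), hx, hy]
  simp

lemma IsLZ.norm_sq_add {lam : ℝ} {x y : ℝ → ℂ} (h : IsLZ lam univ x y) (hx : x 0 = 1)
    (hy : y 0 = 0) (t : ℝ) : ‖x t‖ ^ 2 + ‖y t‖ ^ 2 = 1 := by
  have := h.normSq hx hy t
  rw [Complex.conj_mul', Complex.conj_mul'] at this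
  exact_mod_cast this

lemma IsLZ.norm_le {lam : ℝ} {x y : ℝ → ℂ} (h : IsLZ lam univ x y) (hx : x 0 = 1)
    (hy : y 0 = 0) (t : ℝ) : ‖x t‖ ≤ 1 ∧ ‖y t‖ ≤ 1 := by
  have := h.norm_sq_add hx hy t
  constructor <;> nlinarith [norm_nonneg (x t), norm_nonneg (y t)]

/-- Every solution is a combination of the fundamental one and its SU(2) partner. -/
lemma IsLZ.repr {lam : ℝ} {x y f g : ℝ → ℂ} {a b : ℝ}
    (h : IsLZ lam univ x y) (hx : x 0 = 1) (hy : y 0 = 0) (hfg : IsLZ lam (Icc a b) f g) :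
    ∃ A B : ℂ, ‖A‖ ≤ ‖f a‖ + ‖g a‖ ∧ ‖B‖ ≤ ‖f a‖ + ‖g a‖ ∧
      ∀ t ∈ Icc a b, f t = A * x t - B * conj (y t) ∧ g t = A * y t + B * conj (x t) := by
  have hI := h.mono (subset_univ (Icc a b))
  obtain ⟨hxa, hya⟩ := h.norm_le hx hy a
  refine ⟨conj (x a) * f a + conj (y a) * g a, -y a * f a + x a * g a, ?_, ?_, ?_⟩
  · refine (norm_add_le _ _).trans ?_
    rw [norm_mul, norm_mul, RCLike.norm_conj, RCLike.norm_conj]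
    gcongr <;> exact mul_le_of_le_one_left (norm_nonneg _) ‹_›
  · refine (norm_add_le _ _).trans ?_
    rw [norm_mul, norm_mul, norm_neg]
    gcongr <;> exact mul_le_of_le_one_left (norm_nonneg _) ‹_›
  · intro t ht
    have h1 := hI.pairing hfg t ht
    have h2 := hI.swap.pairing hfg t ht
    have h3 := h.normSq hx hy t
    simp only [map_neg, conj_conj] at h2
    rw [← h1, ← h2]
    constructor
    · linear_combination (-f t) * h3
    · linear_combination (-g t) * h3

/-! ### Asymptotics at infinity -/

/-- A function on `(0, ∞)` whose derivative is `O(t⁻²)` converges at infinity, with error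
`O(t⁻¹)`. -/
lemma exists_limit_of_deriv_bound {h h' : ℝ → ℂ} {C : ℝ}
    (hd : ∀ t, 0 < t → HasDerivAt h (h' t) t) (hb : ∀ t, 0 < t → ‖h' t‖ ≤ C / t ^ 2) :
    ∃ p : ℂ, ∀ t, 0 < t → ‖h t - p‖ ≤ C / t := by
  have hC : 0 ≤ C := by simpa using (norm_nonneg _).trans (hb 1 one_pos)
  have step : ∀ a, 0 < a → ∀ t, a ≤ t → ‖h t - h a‖ ≤ C / a := by
    intro a ha t hat
    have := image_norm_le_of_norm_deriv_right_le_deriv_boundary' (f := fun t => h t - h a)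
      (f' := h') (a := a) (b := t) (B := fun t => C / a - C * t⁻¹)
      (B' := fun t => C / t ^ 2) ?_ ?_ ?_ ?_ ?_ ?_ (right_mem_Icc.2 hat)
    · refine this.trans ?_
      have : 0 ≤ C * t⁻¹ := mul_nonneg hC (inv_nonneg.2 (ha.le.trans hat))
      linarith
    · intro s hs
      exact ((hd s (ha.trans_le hs.1)).continuousAt.sub continuousAt_const).continuousWithinAt
    · intro s hs
      exact ((hd s (ha.trans_le hs.1)).sub_const _).hasDerivWithinAt
    · simp [div_eq_mul_inv]
    · intro s hs
      have : s ≠ 0 := (ha.trans_le hs.1).ne'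
      exact (continuousAt_const.sub
        (continuousAt_const.mul (continuousAt_inv₀ this))).continuousWithinAt
    · intro s hs
      have : s ≠ 0 := (ha.trans_le hs.1).ne'
      convert! (((hasDerivAt_inv this).const_mul C).const_sub (C / a)).hasDerivWithinAt using 1
      field_simp
    · intro s hs
      exact hb s (ha.trans_le hs.1)
  have hcau : CauchySeq fun n : ℕ => h ((n : ℝ) + 1) := by
    refine cauchySeq_of_le_tendsto_0 (fun n : ℕ => 2 * C / ((n : ℝ) + 1)) ?_ ?_
    · intro n m N hn hm
      have hN : (0 : ℝ) < (N : ℝ) + 1 := by positivity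
      have h1 := step _ hN ((n : ℝ) + 1) (by gcongr)
      have h2 := step _ hN ((m : ℝ) + 1) (by gcongr)
      rw [← dist_eq_norm] at h1 h2
      calc _ ≤ C / ((N : ℝ) + 1) + C / ((N : ℝ) + 1) :=
            (dist_triangle_right _ _ _).trans (add_le_add h1 h2)
        _ = _ := by ring
    · have := (tendsto_one_div_add_atTop_nhds_zero_nat (𝕜 := ℝ)).const_mul (2 * C)
      simpa [div_eq_mul_inv] using this
  obtain ⟨p, hp⟩ := cauchySeq_tendsto_of_complete hcau
  refine ⟨p, fun t ht => ?_⟩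
  rw [norm_sub_rev]
  refine le_of_tendsto ((hp.sub_const (h t)).norm) ?_
  filter_upwards [eventually_ge_atTop (Nat.ceil t)] with n hn
  refine step t ht _ ?_
  have : t ≤ n := (Nat.le_ceil t).trans (by exact_mod_cast hn)
  linarith

/-- The slowly varying Coulomb-type phase `|t|^{iλ²/2}` of the adiabatic solutions. -/
def lzLog (lam t : ℝ) : ℂ := cexp (I * ((lam ^ 2 / 2 * Real.log |t| : ℝ) : ℂ))

lemma norm_lzLog (lam t : ℝ) : ‖lzLog lam t‖ = 1 := by
  rw [lzLog, mul_comm, Complex.norm_exp_ofReal_mul_I]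

/-- Asymptotics at `+∞`: the first-order oscillating correction `λ e^{-it²} y / (2t)` removes the
non-integrable part of the coupling. -/
lemma IsLZ.asymptotics {lam : ℝ} {x y : ℝ → ℂ} (h : IsLZ lam univ x y)
    (hb : ∀ t, ‖y t‖ ≤ 1) :
    ∃ (p : ℂ) (K : ℝ), 0 ≤ K ∧ ∀ t, 0 < t → ‖x t - lzLog lam t * p‖ ≤ K / t := by
  set μ : ℂ := (lam : ℂ) ^ 2 / 2 with hμ
  set E : ℝ → ℂ := fun t => cexp (-(I * (t : ℂ) ^ 2)) with hE
  set L : ℝ → ℂ := fun t => cexp (-(I * ((lam ^ 2 / 2 * Real.log t : ℝ) : ℂ))) with hL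
  have nL : ∀ t, ‖L t‖ = 1 := by
    intro t
    rw [hL]
    simp only
    rw [show -(I * ((lam ^ 2 / 2 * Real.log t : ℝ) : ℂ)) =
      ((-(lam ^ 2 / 2 * Real.log t) : ℝ) : ℂ) * I by push_cast; ring,
      Complex.norm_exp_ofReal_mul_I]
  set C : ℝ := ‖-(lam : ℂ) / 2 - I * μ * lam / 2‖ with hC
  have dE : ∀ t : ℝ, HasDerivAt E (E t * (-(I * (2 * t)))) t := by
    intro t
    have hid : HasDerivAt (fun t : ℝ => (t : ℂ)) 1 t := (hasDerivAt_id (t : ℂ)).comp_ofReal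
    convert! ((hid.pow 2).const_mul I).neg.cexp using 1
    simp [hE]
  have dL : ∀ t : ℝ, 0 < t → HasDerivAt L (L t * (-(I * (μ / t)))) t := by
    intro t ht
    have := (((Real.hasDerivAt_log ht.ne').const_mul (lam ^ 2 / 2)).ofReal_comp.const_mul I).neg.cexp
    convert! this using 1
    simp only [hL, hμ, Pi.neg_apply]
    push_cast
    ring
  have key : ∃ p : ℂ, ∀ t, 0 < t →
      ‖L t * (x t + lam / 2 * (E t * y t * (t : ℂ)⁻¹)) - p‖ ≤ C / t := by
    refine exists_limit_of_deriv_bound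
      (h' := fun t => L t * (E t * y t * (-(lam : ℂ) / 2 - I * μ * lam / 2)) / (t : ℂ) ^ 2) ?_ ?_
    · intro t ht
      have ht' : (t : ℂ) ≠ 0 := by exact_mod_cast ht.ne'
      obtain ⟨h1, h2⟩ := h t trivial
      have hid : HasDerivAt (fun t : ℝ => (t : ℂ)) 1 t := (hasDerivAt_id (t : ℂ)).comp_ofReal
      have hinv : HasDerivAt (fun t : ℝ => (t : ℂ)⁻¹) (-1 / (t : ℂ) ^ 2) t := hid.inv ht'
      have hE1 : E t * cexp (I * (t : ℂ) ^ 2) = 1 := by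
        simp only [hE]
        rw [← Complex.exp_add]; simp
      convert! (dL t ht).mul (h1.add ((((dE t).mul h2).mul hinv).const_mul ((lam : ℂ) / 2)))
        using 1
      simp only [Pi.add_apply, Pi.mul_apply]
      change _ = _ + L t * (I * lam * E t * y t + _)
      field_simp
      simp only [hμ]
      linear_combination (-I * L t * x t * lam ^ 2 * t) * hE1
    · intro t ht
      rw [norm_div, norm_mul, nL, one_mul, norm_mul, norm_mul, norm_exp_phase, one_mul, norm_pow,
        Complex.norm_real, Real.norm_of_nonneg ht.le]
      gcongr
      exact mul_le_of_le_one_left (norm_nonneg _) (hb t)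
  obtain ⟨p, hp⟩ := key
  refine ⟨p, C + |lam| / 2, by positivity, fun t ht => ?_⟩
  have h1 : lzLog lam t * L t = 1 := by
    rw [lzLog, abs_of_pos ht, ← Complex.exp_add]; simp
  have h2 : x t - lzLog lam t * p = lzLog lam t *
      ((L t * (x t + lam / 2 * (E t * y t * (t : ℂ)⁻¹)) - p)
        - L t * (lam / 2 * (E t * y t * (t : ℂ)⁻¹))) := by
    linear_combination (-x t) * h1
  have h3 : ‖E t‖ = 1 := norm_exp_phase t
  rw [h2, norm_mul, norm_lzLog, one_mul, add_div]
  refine (norm_sub_le _ _).trans (add_le_add (hp t ht) ?_)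
  rw [norm_mul, nL, one_mul, norm_mul, norm_mul, norm_mul, h3, one_mul, norm_inv, norm_div,
    Complex.norm_real, Complex.norm_real, Real.norm_eq_abs, Real.norm_of_nonneg ht.le,
    Complex.norm_ofNat]
  rw [div_eq_mul_inv (|lam| / 2)]
  have := hb t
  have : ‖y t‖ * t⁻¹ ≤ 1 * t⁻¹ := by gcongr
  rw [one_mul] at this
  gcongr

/-! ### Gaussian averages and the amplitude `p` -/

lemma gauss_int : Integrable (fun s : ℝ => Real.exp (-s ^ 2)) (volume.restrict (Ioi 0)) := by
  have := (integrable_exp_neg_mul_sq (one_pos (α := ℝ))).restrict (s := Ioi 0)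
  simpa using this

lemma gauss_int' : Integrable (fun s : ℝ => s * Real.exp (-s ^ 2)) (volume.restrict (Ioi 0)) := by
  have := (integrable_mul_exp_neg_mul_sq (one_pos (α := ℝ))).restrict (s := Ioi 0)
  simpa using this

/-- Gaussian average of `x` at scale `h`; its large-`h` behaviour detects the amplitude of `x` at
infinity. -/
def gaussAvg (x : ℝ → ℂ) (h : ℝ) : ℂ :=
  ∫ s in Ioi (0 : ℝ), (Real.exp (-s ^ 2) : ℂ) * x (h * s)

/-- The Gaussian average satisfies a first-order equation. The Weber equation
`x'' + 2it x' + λ² x = 0` makes the derivative of `e^{-s²} x'(hs)` equal to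
`-2 e^{-s²} ((1 + ih²) s x'(hs) + (λ²/2) h x(hs))`, and this integrates to zero. -/
lemma gaussAvg_hasDerivAt {lam : ℝ} {x y : ℝ → ℂ} (H : IsLZ lam univ x y) (hx : x 0 = 1)
    (hy : y 0 = 0) (h : ℝ) :
    HasDerivAt (gaussAvg x) (-(lam ^ 2 / 2 * h / (1 + I * h ^ 2)) * gaussAvg x h) h := by
  have hb := H.norm_le hx hy
  have cx : Continuous x := continuous_iff_continuousAt.2 fun t => (H t trivial).1.continuousAt
  have cy : Continuous y := continuous_iff_continuousAt.2 fun t => (H t trivial).2.continuousAt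
  set D : ℝ → ℂ := fun t => I * lam * cexp (-(I * (t : ℂ) ^ 2)) * y t with hD
  have cD : Continuous D := by fun_prop
  have bD : ∀ t, ‖D t‖ ≤ |lam| := by
    intro t
    simp only [hD, norm_mul, norm_exp_phase, Complex.norm_I, Complex.norm_real, Real.norm_eq_abs]
    rw [one_mul, mul_one]
    exact mul_le_of_le_one_right (abs_nonneg _) (hb t).2
  have dD : ∀ t : ℝ, HasDerivAt D (-(2 * I * t) * D t - lam ^ 2 * x t) t := by
    intro t
    have hid : HasDerivAt (fun t : ℝ => (t : ℂ)) 1 t := (hasDerivAt_id (t : ℂ)).comp_ofReal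
    have dE : HasDerivAt (fun t : ℝ => cexp (-(I * (t : ℂ) ^ 2)))
        (cexp (-(I * (t : ℂ) ^ 2)) * (-(I * (2 * t)))) t := by
      convert! ((hid.pow 2).const_mul I).neg.cexp using 1
      simp
    convert! (dE.const_mul (I * (lam : ℂ))).mul (H t trivial).2 using 1
    have hE1 : cexp (-(I * (t : ℂ) ^ 2)) * cexp (I * (t : ℂ) ^ 2) = 1 := by
      rw [← Complex.exp_add]; simp
    simp only [hD]
    linear_combination (-(lam : ℂ) ^ 2 * x t * (cexp (-(I * (t : ℂ) ^ 2)) *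
      cexp (I * (t : ℂ) ^ 2))) * I_sq + ((lam : ℂ) ^ 2 * x t) * hE1
  have cg : Continuous fun s : ℝ => (Real.exp (-s ^ 2) : ℂ) := by fun_prop
  have d1 := hasDerivAt_integral_of_dominated_loc_of_deriv_le (μ := volume.restrict (Ioi (0 : ℝ)))
    (𝕜 := ℝ) (F := fun h s => (Real.exp (-s ^ 2) : ℂ) * x (h * s))
    (F' := fun h s => (Real.exp (-s ^ 2) : ℂ) * (s * D (h * s)))
    (bound := fun s => |lam| * (s * Real.exp (-s ^ 2))) (x₀ := h) (s := univ)
    univ_mem ?_ ?_ ?_ ?_ (gauss_int'.const_mul _) ?_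
  rotate_left
  · exact .of_forall fun h => Continuous.aestronglyMeasurable (by fun_prop)
  · refine gauss_int.mono' (Continuous.aestronglyMeasurable (by fun_prop)) (.of_forall fun s => ?_)
    rw [norm_mul, Complex.norm_real, Real.norm_of_nonneg (Real.exp_nonneg _)]
    exact mul_le_of_le_one_right (Real.exp_nonneg _) (hb _).1
  · exact Continuous.aestronglyMeasurable (by fun_prop)
  · refine (ae_restrict_iff' measurableSet_Ioi).2 (.of_forall fun s hs h _ => ?_)
    have hs : (0 : ℝ) < s := hs
    rw [norm_mul, norm_mul, Complex.norm_real, Complex.norm_real,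
      Real.norm_of_nonneg (Real.exp_nonneg _), Real.norm_of_nonneg hs.le]
    calc _ ≤ Real.exp (-s ^ 2) * (s * |lam|) := by gcongr; exact bD _
      _ = _ := by ring
  · refine .of_forall fun s h _ => ?_
    have := HasDerivAt.scomp (h := fun h : ℝ => h * s) h (H (h * s) trivial).1
      (hasDerivAt_mul_const s)
    convert! this.const_mul (Real.exp (-s ^ 2) : ℂ) using 1
  obtain ⟨int1, d1⟩ := d1
  have int0 : Integrable (fun s : ℝ => (Real.exp (-s ^ 2) : ℂ) * x (h * s))
      (volume.restrict (Ioi 0)) := by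
    refine gauss_int.mono' (Continuous.aestronglyMeasurable (by fun_prop)) (.of_forall fun s => ?_)
    rw [norm_mul, Complex.norm_real, Real.norm_of_nonneg (Real.exp_nonneg _)]
    exact mul_le_of_le_one_right (Real.exp_nonneg _) (hb _).1
  have hne : (1 + I * (h : ℂ) ^ 2) ≠ 0 := by
    intro h0
    have := congrArg Complex.re h0
    simp [← ofReal_pow] at this
  -- The integrand is the derivative of `e^{-s²} x'(hs)`, which vanishes at `0` and at infinity.
  have zero : ∫ s in Ioi (0 : ℝ), ((-2 * (1 + I * (h : ℂ) ^ 2)) *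
        ((Real.exp (-s ^ 2) : ℂ) * (s * D (h * s))) +
      (-(lam : ℂ) ^ 2 * h) * ((Real.exp (-s ^ 2) : ℂ) * x (h * s))) = 0 := by
    have := integral_Ioi_of_hasDerivAt_of_tendsto' (a := 0) (m := (0 : ℂ))
      (f := fun s : ℝ => (Real.exp (-s ^ 2) : ℂ) * D (h * s))
      (f' := fun s : ℝ => ((-2 * (1 + I * (h : ℂ) ^ 2)) *
        ((Real.exp (-s ^ 2) : ℂ) * (s * D (h * s))) +
      (-(lam : ℂ) ^ 2 * h) * ((Real.exp (-s ^ 2) : ℂ) * x (h * s)))) ?_ ?_ ?_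
    · rw [this]; simp [hD, hy]
    · intro s _
      have e1 : HasDerivAt (fun s : ℝ => (Real.exp (-s ^ 2) : ℂ))
          ((Real.exp (-s ^ 2) * (-(2 * s)) : ℝ) : ℂ) s := by
        have : HasDerivAt (fun s : ℝ => Real.exp (-s ^ 2)) (Real.exp (-s ^ 2) * (-(2 * s))) s := by
          simpa using (hasDerivAt_pow 2 s).neg.exp
        exact this.ofReal_comp
      have e2 := HasDerivAt.scomp (h := fun s : ℝ => h * s) s (dD (h * s))
        (hasDerivAt_const_mul h)
      convert! e1.mul e2 using 1
      simp only [Function.comp, real_smul]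
      push_cast
      ring
    · exact (int1.const_mul _).add (int0.const_mul _)
    · refine squeeze_zero_norm (a := fun s : ℝ => Real.exp (-s ^ 2) * |lam|) (fun s => ?_) ?_
      · rw [norm_mul, Complex.norm_real, Real.norm_of_nonneg (Real.exp_nonneg _)]
        gcongr
        exact bD _
      · have : Tendsto (fun s : ℝ => Real.exp (-s ^ 2)) atTop (nhds 0) :=
          Real.tendsto_exp_atBot.comp (tendsto_neg_atTop_atBot.comp (tendsto_pow_atTop two_ne_zero))
        simpa using this.mul_const |lam|
  rw [integral_add (int1.const_mul _) (int0.const_mul _), integral_const_mul,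
    integral_const_mul] at zero
  change HasDerivAt (fun h => ∫ s in Ioi (0 : ℝ), (Real.exp (-s ^ 2) : ℂ) * x (h * s)) _ h
  convert! d1 using 1
  rw [gaussAvg]
  generalize (∫ s in Ioi (0 : ℝ), (Real.exp (-s ^ 2) : ℂ) * (s * D (h * s))) = B at zero ⊢
  generalize (∫ s in Ioi (0 : ℝ), (Real.exp (-s ^ 2) : ℂ) * x (h * s)) = A at zero ⊢
  generalize 1 + I * (h : ℂ) ^ 2 = d at zero hne ⊢
  field_simp
  linear_combination zero

/-- The modulus of the Gaussian average, obtained by integrating its first-order equation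
from `h = 0`. -/
lemma gaussAvg_normSq {lam : ℝ} {x y : ℝ → ℂ} (H : IsLZ lam univ x y) (hx : x 0 = 1)
    (hy : y 0 = 0) (h : ℝ) :
    ‖gaussAvg x h‖ ^ 2 = Real.pi / 4 * Real.exp (-(lam ^ 2 / 2 * Real.arctan (h ^ 2))) := by
  set Q : ℝ → ℂ := fun h => conj (gaussAvg x h) * gaussAvg x h *
    (Real.exp (lam ^ 2 / 2 * Real.arctan (h ^ 2)) : ℂ) with hQ
  have dQ : ∀ h, HasDerivAt Q 0 h := by
    intro h
    have d1 := gaussAvg_hasDerivAt H hx hy h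
    have d2 : HasDerivAt (fun h : ℝ => Real.exp (lam ^ 2 / 2 * Real.arctan (h ^ 2)))
        (Real.exp (lam ^ 2 / 2 * Real.arctan (h ^ 2)) *
          (lam ^ 2 / 2 * (1 / (1 + (h ^ 2) ^ 2) * (2 * h)))) h := by
      simpa using ((hasDerivAt_pow 2 h).arctan.const_mul (lam ^ 2 / 2)).exp
    convert! ((hasDerivAt_conj d1).mul d1).mul d2.ofReal_comp using 1
    simp only [map_mul, map_neg, map_div₀, map_add, map_one, map_pow, conj_I, conj_ofReal,
      map_ofNat, Pi.mul_apply]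
    have hne : ∀ σ : ℂ, σ ^ 2 = -1 → (1 + σ * (h : ℂ) ^ 2) ≠ 0 := by
      intro σ hσ h0
      have h1 : (1 + σ * (h : ℂ) ^ 2) * (1 - σ * (h : ℂ) ^ 2) = ((1 + (h ^ 2) ^ 2 : ℝ) : ℂ) := by
        push_cast
        linear_combination (-(h : ℂ) ^ 4) * hσ
      rw [h0, zero_mul] at h1
      have h2 : (1 + (h ^ 2) ^ 2 : ℝ) = 0 := by exact_mod_cast h1.symm
      exact absurd h2 (by positivity)
    have h1 := hne I I_sq
    have h2 := hne (-I) (by rw [neg_sq, I_sq])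
    have h3 : (1 + ((h : ℂ) ^ 2) ^ 2) = (1 + I * (h : ℂ) ^ 2) * (1 + -I * (h : ℂ) ^ 2) := by
      linear_combination ((h : ℂ) ^ 4) * I_sq
    have h4 : (1 + I * (h : ℂ) ^ 2) + (1 + -I * (h : ℂ) ^ 2) = 2 := by ring
    push_cast
    rw [h3]
    generalize 1 + I * (h : ℂ) ^ 2 = a at h1 h4 ⊢
    generalize 1 + -I * (h : ℂ) ^ 2 = b at h2 h4 ⊢
    generalize conj (gaussAvg x h) = P
    generalize cexp ((lam : ℂ) ^ 2 / 2 * Complex.arctan ((h : ℂ) ^ 2)) = E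
    field_simp
    linear_combination ((lam : ℂ) ^ 2 * h * P * gaussAvg x h * E) * h4
  have hconst : Q h = Q 0 :=
    is_const_of_deriv_eq_zero (fun h => (dQ h).differentiableAt) (fun h => (dQ h).deriv) h 0
  have h0 : gaussAvg x 0 = ((Real.sqrt Real.pi / 2 : ℝ) : ℂ) := by
    have := integral_gaussian_Ioi 1
    simp only [neg_mul, one_mul, div_one] at this
    rw [gaussAvg, ← this, ← integral_complex_ofReal]
    simp [hx]
  have e : ∀ h, Q h = ((‖gaussAvg x h‖ ^ 2 *
      Real.exp (lam ^ 2 / 2 * Real.arctan (h ^ 2)) : ℝ) : ℂ) := by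
    intro h
    simp only [hQ]
    rw [Complex.conj_mul']
    push_cast
    rfl
  rw [e, e, h0] at hconst
  have hc := Complex.ofReal_injective hconst
  rw [Complex.norm_real, Real.norm_of_nonneg (by positivity), div_pow,
    Real.sq_sqrt Real.pi_pos.le] at hc
  rw [Real.exp_neg, ← div_eq_mul_inv, eq_div_iff (Real.exp_pos _).ne', hc]
  simp
  norm_num

/-- The Mellin transform of the Gaussian on the line `Re = 1/2`, up to normalisation. -/
lemma integral_gauss_lzLog (lam : ℝ) :
    ∫ s in Ioi (0 : ℝ), (Real.exp (-s ^ 2) : ℂ) * lzLog lam s =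
      1 / 2 * Complex.Gamma (1 / 2 + I * ((lam ^ 2 / 4 : ℝ) : ℂ)) := by
  have hz : 0 < (1 / 2 + I * ((lam ^ 2 / 4 : ℝ) : ℂ)).re := by
    generalize lam ^ 2 / 4 = c
    simp
  have sub := integral_comp_rpow_Ioi_of_pos (p := 2) (g := fun t : ℝ =>
    (Real.exp (-t) : ℂ) * (t : ℂ) ^ (1 / 2 + I * ((lam ^ 2 / 4 : ℝ) : ℂ) - 1)) two_pos
  rw [Complex.Gamma_eq_integral hz, Complex.GammaIntegral]
  refine Eq.trans ?_ (congrArg (fun z : ℂ => 1 / 2 * z) sub)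
  rw [← integral_const_mul]
  refine setIntegral_congr_fun measurableSet_Ioi fun s hs => ?_
  have hs : (0 : ℝ) < s := hs
  have hs' : (s : ℂ) ≠ 0 := by exact_mod_cast hs.ne'
  have h1 : (((s ^ (2 : ℝ) : ℝ) : ℂ)) ^ (1 / 2 + I * ((lam ^ 2 / 4 : ℝ) : ℂ) - 1) =
      (s : ℂ)⁻¹ * lzLog lam s := by
    rw [Real.rpow_two, Complex.cpow_def_of_ne_zero (by exact_mod_cast (pow_pos hs 2).ne'),
      ← Complex.ofReal_log (by positivity), Real.log_pow, lzLog, abs_of_pos hs]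
    have : (s : ℂ)⁻¹ = cexp (-(Real.log s : ℂ)) := by
      rw [Complex.exp_neg, ← Complex.ofReal_exp, Real.exp_log hs]
    rw [this, ← Complex.exp_add]
    congr 1
    push_cast
    ring
  rw [h1, real_smul, Real.rpow_two, show (2 : ℝ) - 1 = 1 by norm_num, Real.rpow_one]
  push_cast
  field_simp

lemma norm_gamma_half (c : ℝ) :
    ‖Complex.Gamma (1 / 2 + I * (c : ℂ))‖ ^ 2 = Real.pi / Real.cosh (Real.pi * c) := by
  have h1 := Complex.Gamma_mul_Gamma_one_sub (1 / 2 + I * (c : ℂ))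
  have h2 : (1 : ℂ) - (1 / 2 + I * (c : ℂ)) = conj (1 / 2 + I * (c : ℂ)) := by
    simp only [map_add, map_mul, map_div₀, map_one, map_ofNat, conj_I, conj_ofReal]
    ring
  have h3 : Complex.sin (Real.pi * (1 / 2 + I * (c : ℂ))) = (Real.cosh (Real.pi * c) : ℂ) := by
    rw [show (Real.pi : ℂ) * (1 / 2 + I * (c : ℂ)) = (Real.pi * c : ℝ) * I + Real.pi / 2 by
      push_cast; ring, Complex.sin_add_pi_div_two, Complex.cos_mul_I, Complex.ofReal_cosh]
  rw [h2, Complex.Gamma_conj, Complex.mul_conj', h3] at h1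
  exact_mod_cast h1

/-- The amplitude of the even component at infinity. -/
lemma IsLZ.amplitude {lam : ℝ} {x y : ℝ → ℂ} (H : IsLZ lam univ x y) (hx : x 0 = 1)
    (hy : y 0 = 0) {p : ℂ} {K : ℝ}
    (hp : ∀ t, 0 < t → ‖x t - lzLog lam t * p‖ ≤ K / t) :
    2 * ‖p‖ ^ 2 = 1 + Real.exp (-Real.pi * lam ^ 2 / 2) := by
  have hb := H.norm_le hx hy
  have cx : Continuous x := continuous_iff_continuousAt.2 fun t => (H t trivial).1.continuousAt
  have mul_log : ∀ h s : ℝ, 0 < h → 0 < s → lzLog lam (h * s) = lzLog lam h * lzLog lam s := by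
    intro h s hh hs
    simp only [lzLog]
    rw [abs_mul, Real.log_mul (abs_pos.2 hh.ne').ne' (abs_pos.2 hs.ne').ne', ← Complex.exp_add]
    congr 1
    push_cast
    ring
  have lim1 : Tendsto (fun h : ℝ => ∫ s in Ioi (0 : ℝ),
        conj (lzLog lam h) * ((Real.exp (-s ^ 2) : ℂ) * x (h * s))) atTop
      (nhds (∫ s in Ioi (0 : ℝ), p * ((Real.exp (-s ^ 2) : ℂ) * lzLog lam s))) := by
    refine tendsto_integral_filter_of_dominated_convergence (fun s => Real.exp (-s ^ 2)) ?_ ?_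
      gauss_int ?_
    · exact .of_forall fun h => Continuous.aestronglyMeasurable (by fun_prop)
    · refine .of_forall fun h => .of_forall fun s => ?_
      rw [norm_mul, RCLike.norm_conj, norm_lzLog, one_mul, norm_mul, Complex.norm_real,
        Real.norm_of_nonneg (Real.exp_nonneg _)]
      exact mul_le_of_le_one_right (Real.exp_nonneg _) (hb _).1
    · refine (ae_restrict_iff' measurableSet_Ioi).2 (.of_forall fun s hs => ?_)
      have hs : (0 : ℝ) < s := hs
      have lim : Tendsto (fun h : ℝ => K / (h * s)) atTop (nhds 0) :=
        (tendsto_id.atTop_mul_const hs).const_div_atTop K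
      rw [tendsto_iff_norm_sub_tendsto_zero]
      refine squeeze_zero' (.of_forall fun _ => norm_nonneg _) ?_ lim
      filter_upwards [eventually_gt_atTop 0] with h hh
      have h1 : conj (lzLog lam h) * lzLog lam h = 1 := by
        rw [Complex.conj_mul', norm_lzLog]; simp
      have h2 : conj (lzLog lam h) * ((Real.exp (-s ^ 2) : ℂ) * x (h * s)) -
          p * ((Real.exp (-s ^ 2) : ℂ) * lzLog lam s) =
          conj (lzLog lam h) * ((Real.exp (-s ^ 2) : ℂ) *
            (x (h * s) - lzLog lam (h * s) * p)) := by
        rw [mul_log h s hh hs]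
        linear_combination (p * (Real.exp (-s ^ 2) : ℂ) * lzLog lam s) * h1
      rw [h2, norm_mul, RCLike.norm_conj, norm_lzLog, one_mul, norm_mul, Complex.norm_real,
        Real.norm_of_nonneg (Real.exp_nonneg _)]
      refine (mul_le_of_le_one_left (norm_nonneg _) ?_).trans (hp _ (mul_pos hh hs))
      exact Real.exp_le_one_iff.2 (by nlinarith)
  have lim2 : Tendsto (fun h : ℝ => ‖gaussAvg x h‖ ^ 2) atTop
      (nhds (‖p‖ ^ 2 * (Real.pi / Real.cosh (Real.pi * (lam ^ 2 / 4)) / 4))) := by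
    convert! (lim1.norm).pow 2 using 1
    · ext h
      rw [integral_const_mul, norm_mul, RCLike.norm_conj, norm_lzLog, one_mul]
      rfl
    · rw [integral_const_mul, integral_gauss_lzLog, ← norm_gamma_half, norm_mul, norm_mul]
      congr 1
      norm_num
      ring
  have lim3 : Tendsto (fun h : ℝ => ‖gaussAvg x h‖ ^ 2) atTop
      (nhds (Real.pi / 4 * Real.exp (-(lam ^ 2 / 2 * (Real.pi / 2))))) := by
    simp only [gaussAvg_normSq H hx hy]
    have h1 : Tendsto (fun h : ℝ => Real.arctan (h ^ 2)) atTop (nhds (Real.pi / 2)) :=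
      (Real.tendsto_arctan_atTop.mono_right nhdsWithin_le_nhds).comp
        (tendsto_pow_atTop two_ne_zero)
    exact ((Real.continuous_exp.tendsto _).comp ((h1.const_mul _).neg)).const_mul _
  have e := tendsto_nhds_unique lim2 lim3
  have hcosh := Real.cosh_pos (Real.pi * (lam ^ 2 / 4))
  have e2 : ‖p‖ ^ 2 = Real.cosh (Real.pi * (lam ^ 2 / 4)) *
      Real.exp (-(lam ^ 2 / 2 * (Real.pi / 2))) := by
    have := Real.pi_pos
    field_simp at e ⊢
    linarith
  rw [e2, Real.cosh_eq]
  have h1 : Real.exp (Real.pi * (lam ^ 2 / 4)) * Real.exp (-(lam ^ 2 / 2 * (Real.pi / 2))) = 1 := by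
    rw [← Real.exp_add]; ring_nf; simp
  have h2 : Real.exp (-(Real.pi * (lam ^ 2 / 4))) * Real.exp (-(lam ^ 2 / 2 * (Real.pi / 2))) =
      Real.exp (-Real.pi * lam ^ 2 / 2) := by
    rw [← Real.exp_add]; ring_nf
  linear_combination h1 + h2

/-! ### The connection formula -/

/-- The even/odd fundamental solution together with its amplitudes `p`, `q` at infinity; the
Landau–Zener transition amplitude is `‖p‖ ^ 2 - ‖q‖ ^ 2`. -/
lemma exists_fundamental (lam : ℝ) :
    ∃ (x y : ℝ → ℂ) (p q : ℂ) (K : ℝ), IsLZ lam univ x y ∧ x 0 = 1 ∧ y 0 = 0 ∧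
      (∀ t, x (-t) = x t) ∧ (∀ t, y (-t) = -y t) ∧ 0 ≤ K ∧
      (∀ t, 0 < t → ‖x t - lzLog lam t * p‖ ≤ K / t ∧
        ‖y t - conj (lzLog lam t) * q‖ ≤ K / t) ∧
      ‖p‖ ^ 2 + ‖q‖ ^ 2 = 1 ∧ ‖p‖ ^ 2 - ‖q‖ ^ 2 = Real.exp (-Real.pi * lam ^ 2 / 2) := by
  obtain ⟨x, y, H, hx, hy, ev, od⟩ := exists_isLZ lam
  have hb := H.norm_le hx hy
  obtain ⟨p, K₁, hK₁, hp⟩ := H.asymptotics fun t => (hb t).2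
  obtain ⟨r, K₂, hK₂, hr⟩ := H.swap.asymptotics fun t => by
    rw [RCLike.norm_conj]; exact (hb t).1
  have hq : ∀ t, 0 < t → ‖y t - conj (lzLog lam t) * (-conj r)‖ ≤ K₂ / t := by
    intro t ht
    refine le_of_eq_of_le ?_ (hr t ht)
    rw [← RCLike.norm_conj, ← norm_neg]
    congr 1
    simp only [map_sub, map_mul, map_neg, conj_conj]
    ring
  have amp := H.amplitude hx hy hp
  have lim : ∀ (z : ℝ → ℂ) (c : ℝ → ℂ) (w : ℂ) (K : ℝ), (∀ t, ‖c t‖ = 1) →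
      (∀ t, 0 < t → ‖z t - c t * w‖ ≤ K / t) →
      Tendsto (fun t => ‖z t‖) atTop (nhds ‖w‖) := by
    intro z c w K hc hz
    rw [tendsto_iff_norm_sub_tendsto_zero]
    refine squeeze_zero' (.of_forall fun _ => norm_nonneg _) ?_
      ((tendsto_id (α := ℝ)).const_div_atTop K)
    filter_upwards [eventually_gt_atTop 0] with t ht
    refine le_trans ?_ (hz t ht)
    have := abs_norm_sub_norm_le (z t) (c t * w)
    rwa [norm_mul, hc, one_mul] at this
  have sum : ‖p‖ ^ 2 + ‖-conj r‖ ^ 2 = 1 := by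
    have h1 := lim x (lzLog lam) p K₁ (norm_lzLog lam) hp
    have h2 := lim y (fun t => conj (lzLog lam t)) (-conj r) K₂
      (fun t => by rw [RCLike.norm_conj, norm_lzLog]) hq
    have h3 := (h1.pow 2).add (h2.pow 2)
    simp only [H.norm_sq_add hx hy] at h3
    exact tendsto_nhds_unique h3 tendsto_const_nhds
  refine ⟨x, y, p, -conj r, K₁ + K₂, H, hx, hy, ev, od, by positivity, fun t ht => ⟨?_, ?_⟩,
    sum, by linarith⟩
  · exact (hp t ht).trans (by gcongr; linarith)
  · exact (hq t ht).trans (by gcongr; linarith)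

/-- Rescaling time by `√ε` and passing to rotating coordinates removes the parameter `ε`. -/
lemma isLZ_rescale {lam ε s₀ : ℝ} (hε : 0 < ε) {u : ℝ → ℂ × ℂ}
    (hu : ∀ s ∈ Set.Icc (-s₀) s₀,
      HasDerivAt (fun r => (u r).1)
        ((Complex.I / (ε : ℂ)) *
          ((s : ℂ) * (u s).1 + ((Real.sqrt ε * lam : ℝ) : ℂ) * (u s).2)) s ∧
      HasDerivAt (fun r => (u r).2)
        ((Complex.I / (ε : ℂ)) *
          (((Real.sqrt ε * lam : ℝ) : ℂ) * (u s).1 - (s : ℂ) * (u s).2)) s) :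
    IsLZ lam (Icc (-s₀ / Real.sqrt ε) (s₀ / Real.sqrt ε))
      (fun t => cexp (-(I * ((t ^ 2 / 2 : ℝ) : ℂ))) * (u (Real.sqrt ε * t)).1)
      (fun t => cexp (I * ((t ^ 2 / 2 : ℝ) : ℂ)) * (u (Real.sqrt ε * t)).2) := by
  intro t ht
  have hr : 0 < Real.sqrt ε := Real.sqrt_pos.2 hε
  have hr2 : Real.sqrt ε ^ 2 = ε := Real.sq_sqrt hε.le
  have mem : Real.sqrt ε * t ∈ Icc (-s₀) s₀ := by
    obtain ⟨h1, h2⟩ := ht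
    rw [div_le_iff₀ hr] at h1
    rw [le_div_iff₀ hr] at h2
    constructor <;> linarith
  generalize Real.sqrt ε = r at *
  subst hr2
  have hr' : (r : ℂ) ≠ 0 := by exact_mod_cast hr.ne'
  obtain ⟨h1, h2⟩ := hu _ mem
  have lin : HasDerivAt (fun t : ℝ => r * t) r t := by
    simpa using (hasDerivAt_id t).const_mul r
  have d1 := h1.scomp t lin
  have d2 := h2.scomp t lin
  have ph : HasDerivAt (fun t : ℝ => I * ((t ^ 2 / 2 : ℝ) : ℂ)) (I * t) t := by
    have : HasDerivAt (fun t : ℝ => t ^ 2 / 2) t t := by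
      convert! (hasDerivAt_pow 2 t).div_const 2 using 1
      simp
    exact this.ofReal_comp.const_mul I
  have phn : HasDerivAt (fun t : ℝ => -(I * ((t ^ 2 / 2 : ℝ) : ℂ))) (-(I * t)) t := ph.neg
  have e1 : cexp (-(I * (t : ℂ) ^ 2)) * cexp (I * ((t ^ 2 / 2 : ℝ) : ℂ)) =
      cexp (-(I * ((t ^ 2 / 2 : ℝ) : ℂ))) := by
    rw [← Complex.exp_add]; congr 1; push_cast; ring
  have e2 : cexp (I * (t : ℂ) ^ 2) * cexp (-(I * ((t ^ 2 / 2 : ℝ) : ℂ))) =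
      cexp (I * ((t ^ 2 / 2 : ℝ) : ℂ)) := by
    rw [← Complex.exp_add]; congr 1; push_cast; ring
  constructor
  · convert! phn.cexp.mul d1 using 1
    simp only [Function.comp_apply, real_smul]
    rw [mul_assoc, ← mul_assoc (cexp _) (cexp _), e1]
    push_cast
    field_simp
    ring
  · convert! ph.cexp.mul d2 using 1
    simp only [Function.comp_apply, real_smul]
    rw [mul_assoc, ← mul_assoc (cexp _) (cexp _), e2]
    push_cast
    field_simp
    ring

lemma lzPhase_eq (lam ε s : ℝ) : lzPhase lam ε s =
    cexp (I * ((s ^ 2 / (2 * ε) : ℝ) : ℂ)) * lzLog lam (s / Real.sqrt ε) := by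
  rw [lzPhase, lzLog, abs_div, abs_of_nonneg (Real.sqrt_nonneg ε)]

lemma lzLog_neg (lam t : ℝ) : lzLog lam (-t) = lzLog lam t := by
  simp [lzLog]

/-- Asymptotics are inherited by the solution `A (x, y) + B (-conj y, conj x)`. -/
lemma combination_bound {X Y L p q : ℂ} {κ : ℝ} (A B : ℂ) (h1 : ‖X - L * p‖ ≤ κ)
    (h2 : ‖Y - conj L * q‖ ≤ κ) :
    ‖A * X - B * conj Y - L * (A * p - B * conj q)‖ ≤ (‖A‖ + ‖B‖) * κ ∧
    ‖A * Y + B * conj X - conj L * (A * q + B * conj p)‖ ≤ (‖A‖ + ‖B‖) * κ := by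
  have h1' : ‖conj X - conj L * conj p‖ ≤ κ := by
    rw [← map_mul, ← map_sub, RCLike.norm_conj]; exact h1
  have h2' : ‖conj Y - L * conj q‖ ≤ κ := by
    rw [← RCLike.norm_conj, map_sub, map_mul, conj_conj, conj_conj]; exact h2
  constructor
  · rw [show A * X - B * conj Y - L * (A * p - B * conj q) =
      A * (X - L * p) - B * (conj Y - L * conj q) by ring]
    refine (norm_sub_le _ _).trans ?_
    rw [norm_mul, norm_mul, add_mul]
    gcongr
  · rw [show A * Y + B * conj X - conj L * (A * q + B * conj p) =
      A * (Y - conj L * q) + B * (conj X - conj L * conj p) by ring]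
    refine (norm_add_le _ _).trans ?_
    rw [norm_mul, norm_mul, add_mul]
    gcongr

/-- Quantitative asymptotics at fixed `ε`, with error `O(√ε / |s|)`: the incoming and outgoing
amplitudes are expressed through the coordinates `A`, `B` of the solution in the fundamental
system. -/
lemma exists_amplitudes {lam : ℝ} {x y : ℝ → ℂ} {p q : ℂ} {K : ℝ} (H : IsLZ lam univ x y)
    (hx : x 0 = 1) (hy : y 0 = 0) (ev : ∀ t, x (-t) = x t) (od : ∀ t, y (-t) = -y t)
    (hK : 0 ≤ K)
    (as : ∀ t, 0 < t → ‖x t - lzLog lam t * p‖ ≤ K / t ∧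
        ‖y t - conj (lzLog lam t) * q‖ ≤ K / t)
    {ε s₀ : ℝ} (hs₀ : 0 < s₀) (hε : 0 < ε) {u : ℝ → ℂ × ℂ}
    (hu : ∀ s ∈ Set.Icc (-s₀) s₀,
      HasDerivAt (fun r => (u r).1)
        ((Complex.I / (ε : ℂ)) *
          ((s : ℂ) * (u s).1 + ((Real.sqrt ε * lam : ℝ) : ℂ) * (u s).2)) s ∧
      HasDerivAt (fun r => (u r).2)
        ((Complex.I / (ε : ℂ)) *
          (((Real.sqrt ε * lam : ℝ) : ℂ) * (u s).1 - (s : ℂ) * (u s).2)) s)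
    (hinit : ‖u (-s₀)‖ ≤ 1) :
    ∃ A B : ℂ,
      (∀ δ, 0 < δ → ∀ s ∈ Icc δ s₀,
        ‖(u s).1 - lzPhase lam ε s * (A * p - B * conj q)‖ +
          ‖(u s).2 - conj (lzPhase lam ε s) * (A * q + B * conj p)‖ ≤
            8 * K / δ * Real.sqrt ε) ∧
      (∀ δ, 0 < δ → ∀ s ∈ Icc (-s₀) (-δ),
        ‖(u s).1 - lzPhase lam ε s * (A * p + B * conj q)‖ +
          ‖(u s).2 - conj (lzPhase lam ε s) * (-A * q + B * conj p)‖ ≤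
            8 * K / δ * Real.sqrt ε) := by
  have hr : 0 < Real.sqrt ε := Real.sqrt_pos.2 hε
  have hr2 : Real.sqrt ε ^ 2 = ε := Real.sq_sqrt hε.le
  obtain ⟨A, B, hA, hB, rep⟩ := H.repr hx hy (isLZ_rescale hε hu)
  have start : Real.sqrt ε * (-s₀ / Real.sqrt ε) = -s₀ := by field_simp
  simp only [start, norm_mul] at hA hB
  have c1 := (norm_fst_le (u (-s₀))).trans hinit
  have c2 := (norm_snd_le (u (-s₀))).trans hinit
  have nrm : ∀ c : ℝ, ‖cexp (I * (c : ℂ))‖ = 1 := fun c => by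
    rw [mul_comm]; exact Complex.norm_exp_ofReal_mul_I c
  have nrm' : ∀ c : ℝ, ‖cexp (-(I * (c : ℂ)))‖ = 1 := fun c => by
    have := nrm (-c)
    rwa [Complex.ofReal_neg, mul_neg] at this
  have bd : ‖A‖ + ‖B‖ ≤ 4 := by
    rw [nrm, nrm'] at hA hB
    linarith
  -- Undo the change of variables: `s = √ε t`.
  have back : ∀ s ∈ Icc (-s₀) s₀,
      (u s).1 = cexp (I * ((s ^ 2 / (2 * ε) : ℝ) : ℂ)) *
        (A * x (s / Real.sqrt ε) - B * conj (y (s / Real.sqrt ε))) ∧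
      (u s).2 = conj (cexp (I * ((s ^ 2 / (2 * ε) : ℝ) : ℂ))) *
        (A * y (s / Real.sqrt ε) + B * conj (x (s / Real.sqrt ε))) := by
    intro s hs
    have e0 : Real.sqrt ε * (s / Real.sqrt ε) = s := by field_simp
    have e1 : (s / Real.sqrt ε) ^ 2 / 2 = s ^ 2 / (2 * ε) := by
      rw [div_pow, hr2]; field_simp
    have := rep (s / Real.sqrt ε)
      ⟨by gcongr; exact hs.1, by gcongr; exact hs.2⟩
    simp only [e0, e1] at this
    have e2 : conj (cexp (I * ((s ^ 2 / (2 * ε) : ℝ) : ℂ))) =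
        cexp (-(I * ((s ^ 2 / (2 * ε) : ℝ) : ℂ))) := by
      rw [← Complex.exp_conj, map_mul, conj_I, conj_ofReal, neg_mul]
    rw [← this.1, ← this.2, e2, ← mul_assoc, ← mul_assoc, ← Complex.exp_add, ← Complex.exp_add]
    simp
  have red : ∀ (c : ℝ) (L a b a' b' : ℂ),
      ‖cexp (I * (c : ℂ)) * a - cexp (I * (c : ℂ)) * L * a'‖ +
        ‖conj (cexp (I * (c : ℂ))) * b - conj (cexp (I * (c : ℂ)) * L) * b'‖ =
      ‖a - L * a'‖ + ‖b - conj L * b'‖ := by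
    intro c L a b a' b'
    rw [map_mul, mul_assoc, mul_assoc, ← mul_sub, ← mul_sub, norm_mul, norm_mul, RCLike.norm_conj,
      nrm, one_mul, one_mul]
  have fin : ∀ δ s, 0 < δ → δ ≤ s → 4 * (K / (s / Real.sqrt ε)) + 4 * (K / (s / Real.sqrt ε)) ≤
      8 * K / δ * Real.sqrt ε := by
    intro δ s hδ hs
    have : K / (s / Real.sqrt ε) ≤ K / (δ / Real.sqrt ε) := by gcongr
    have e : K / (δ / Real.sqrt ε) = K / δ * Real.sqrt ε := by field_simp
    rw [e] at this
    calc _ ≤ 8 * (K / δ * Real.sqrt ε) := by linarith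
      _ = _ := by ring
  refine ⟨A, B, fun δ hδ s hs => ?_, fun δ hδ s hs => ?_⟩
  · have hs' : 0 < s := hδ.trans_le hs.1
    have ht : 0 < s / Real.sqrt ε := by positivity
    obtain ⟨h1, h2⟩ := back s ⟨by linarith, hs.2⟩
    rw [h1, h2, lzPhase_eq, red]
    obtain ⟨b1, b2⟩ := combination_bound A B (as _ ht).1 (as _ ht).2
    have k : 0 ≤ K / (s / Real.sqrt ε) := by positivity
    refine le_trans ?_ (fin δ s hδ hs.1)
    exact add_le_add (b1.trans (by gcongr)) (b2.trans (by gcongr))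
  · have hs' : 0 < -s := by linarith [hs.2]
    have ht : 0 < -s / Real.sqrt ε := by positivity
    obtain ⟨h1, h2⟩ := back s ⟨hs.1, by linarith⟩
    have e : s / Real.sqrt ε = -(-s / Real.sqrt ε) := by ring
    rw [h1, h2, lzPhase_eq, red, e, ev, od, lzLog_neg]
    have b1 := (combination_bound A (-B) (as _ ht).1 (as _ ht).2).1
    have b2 := (combination_bound (-A) B (as _ ht).1 (as _ ht).2).2
    have k : 0 ≤ K / (-s / Real.sqrt ε) := by positivity
    refine le_trans ?_ (fin δ (-s) hδ (by linarith [hs.2]))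
    rw [norm_neg] at b1 b2
    have b1' := b1.trans (mul_le_mul_of_nonneg_right bd k)
    have b2' := b2.trans (mul_le_mul_of_nonneg_right bd k)
    refine add_le_add (le_of_eq_of_le ?_ b1') (le_of_eq_of_le ?_ b2')
    · congr 1
      simp only [map_neg]
      ring
    · congr 1
      ring

lemma tendsto_iSup_of_le {ι : Type*} {F : ℝ → ι → ℝ} {C : ℝ} (hC : 0 ≤ C)
    (h0 : ∀ ε i, 0 ≤ F ε i)
    (h : ∀ ε ∈ Set.Ioc (0 : ℝ) 1, ∀ i, F ε i ≤ C * Real.sqrt ε) :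
    Tendsto (fun ε => ⨆ i, F ε i) (nhdsWithin 0 (Set.Ioc 0 1)) (nhds 0) := by
  have lim : Tendsto (fun ε => C * Real.sqrt ε) (nhdsWithin 0 (Set.Ioc 0 1)) (nhds 0) := by
    have : Continuous fun ε => C * Real.sqrt ε := by fun_prop
    simpa using (this.tendsto 0).mono_left nhdsWithin_le_nhds
  refine squeeze_zero' (.of_forall fun ε => Real.iSup_nonneg (h0 ε)) ?_ lim
  filter_upwards [self_mem_nhdsWithin] with ε hε
  exact Real.iSup_le (h ε hε) (by positivity)

/-- the Landau–Zener connection formula for the normal form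
`(ε/i) u' = [[s, √ε λ], [√ε λ, -s]] u`. Away from `s = 0`, solutions are given, up to
`o(1)`, by explicit oscillatory phases times constant vectors `α^ε` (incoming) and
`ω^ε` (outgoing), related by the transfer matrix with diagonal entry
`a = e^{-πλ²/2}` and off-diagonal entries `-conj b`, `b`, `a² + |b|² = 1`. -/
theorem landau_zener_connection
    (lam s₀ : ℝ) (hs₀ : 0 < s₀) :
    ∃ b : ℂ, (Real.exp (-Real.pi * lam ^ 2 / 2)) ^ 2 + ‖b‖ ^ 2 = 1 ∧
      ∀ u : ℝ → ℝ → ℂ × ℂ,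
        (∀ ε ∈ Set.Ioc (0 : ℝ) 1, ∀ s ∈ Set.Icc (-s₀) s₀,
          HasDerivAt (fun r => (u ε r).1)
            ((Complex.I / (ε : ℂ)) *
              ((s : ℂ) * (u ε s).1 + ((Real.sqrt ε * lam : ℝ) : ℂ) * (u ε s).2)) s ∧
          HasDerivAt (fun r => (u ε r).2)
            ((Complex.I / (ε : ℂ)) *
              (((Real.sqrt ε * lam : ℝ) : ℂ) * (u ε s).1 - (s : ℂ) * (u ε s).2)) s) →
        (∀ ε ∈ Set.Ioc (0 : ℝ) 1, ‖u ε (-s₀)‖ ≤ 1) →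
        ∃ α ω : ℝ → ℂ × ℂ,
          (∀ ε ∈ Set.Ioc (0 : ℝ) 1,
            (ω ε).1 = ((Real.exp (-Real.pi * lam ^ 2 / 2) : ℝ) : ℂ) * (α ε).1 -
                (starRingEnd ℂ) b * (α ε).2 ∧
            (ω ε).2 = b * (α ε).1 +
                ((Real.exp (-Real.pi * lam ^ 2 / 2) : ℝ) : ℂ) * (α ε).2) ∧
          ∀ δ ∈ Set.Ioc (0 : ℝ) s₀,
            Tendsto (fun ε : ℝ =>
                ⨆ s : Set.Icc (-s₀) (-δ),
                  (‖(u ε (s : ℝ)).1 - lzPhase lam ε (s : ℝ) * (α ε).1‖ +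
                    ‖(u ε (s : ℝ)).2 - (starRingEnd ℂ) (lzPhase lam ε (s : ℝ)) * (α ε).2‖))
              (nhdsWithin 0 (Set.Ioc 0 1)) (nhds 0) ∧
            Tendsto (fun ε : ℝ =>
                ⨆ s : Set.Icc δ s₀,
                  (‖(u ε (s : ℝ)).1 - lzPhase lam ε (s : ℝ) * (ω ε).1‖ +
                    ‖(u ε (s : ℝ)).2 - (starRingEnd ℂ) (lzPhase lam ε (s : ℝ)) * (ω ε).2‖))
              (nhdsWithin 0 (Set.Ioc 0 1)) (nhds 0) := by
  obtain ⟨x, y, p, q, K, H, hx, hy, ev, od, hK, as, sum, dif⟩ := exists_fundamental lam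
  refine ⟨2 * conj p * q, ?_, fun u hu hinit => ?_⟩
  · rw [← dif, norm_mul, norm_mul, RCLike.norm_conj, RCLike.norm_ofNat]
    linear_combination (‖p‖ ^ 2 + ‖q‖ ^ 2 + 1) * sum
  -- Outside `(0, 1]` the coordinates `A ε`, `B ε` are irrelevant and set to zero.
  have key : ∀ ε, ∃ A B : ℂ, ε ∈ Set.Ioc (0 : ℝ) 1 → _ := fun ε => by
    by_cases hε : ε ∈ Set.Ioc (0 : ℝ) 1
    · obtain ⟨A, B, h⟩ := exists_amplitudes H hx hy ev od hK as hs₀ hε.1 (hu ε hε) (hinit ε hε)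
      exact ⟨A, B, fun _ => h⟩
    · exact ⟨0, 0, fun h => (hε h).elim⟩
  choose A B hAB using key
  have sum' : p * conj p + q * conj q = 1 := by
    rw [Complex.mul_conj', Complex.mul_conj']; exact_mod_cast sum
  have dif' : ((Real.exp (-Real.pi * lam ^ 2 / 2) : ℝ) : ℂ) = p * conj p - q * conj q := by
    rw [Complex.mul_conj', Complex.mul_conj', ← dif]; push_cast; rfl
  refine ⟨fun ε => (A ε * p + B ε * conj q, -A ε * q + B ε * conj p),
    fun ε => (A ε * p - B ε * conj q, A ε * q + B ε * conj p), fun ε hε => ⟨?_, ?_⟩,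
    fun δ hδ => ⟨?_, ?_⟩⟩
  · simp only [dif', map_mul, map_ofNat, conj_conj]
    linear_combination (-(A ε * p) + B ε * conj q) * sum'
  · simp only [dif']
    linear_combination (-(A ε * q) - B ε * conj p) * sum'
  · refine tendsto_iSup_of_le (C := 8 * K / δ) (by have := hδ.1; positivity)
      (fun _ _ => by positivity) fun ε hε s => (hAB ε hε).2 δ hδ.1 s s.2
  · refine tendsto_iSup_of_le (C := 8 * K / δ) (by have := hδ.1; positivity)
      (fun _ _ => by positivity) fun ε hε s => (hAB ε hε).1 δ hδ.1 s s.2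
end
end

section
/- Let x₀⁺, x₀⁻ ∈ ℝ² be unit vectors and s⁺, s⁻ ∈ ℝ with s⁻ < 0 and (s⁻)² > 2, and assume s⁺ + √((s⁺)² + 2) = −s⁻ − √((s⁻)² − 2) =: t*. Then t* > 0. Define, for t ∈ ℝ: x⁺(t) := (1 + s⁺ t − t²/2) x₀⁺, ξ⁺(t) := (s⁺ − t) x₀⁺, x⁻(t) := (1 + s⁻ t + t²/2) x₀⁻, ξ⁻(t) := (s⁻ + t) x₀⁻. Then: (i) x⁺(0) = x₀⁺, ξ⁺(0) = s⁺x₀⁺, x⁻(0) = x₀⁻, ξ⁻(0) = s⁻x₀⁻; (ii) for every t ∈ [0, t*), x⁺(t) ≠ 0 and x⁻(t) ≠ 0, and the curves solve the Hamiltonian systems (x⁺)'(t) = ξ⁺(t), (ξ⁺)'(t) = −x⁺(t)/|x⁺(t)| and (x⁻)'(t) = ξ⁻(t), (ξ⁻)'(t) = +x⁻(t)/|x⁻(t)|; (iii) both trajectories reach the crossing set S = {0} at the same time t*: x⁺(t*) = x⁻(t*) = 0, with nonzero speeds ξ⁺(t*) = −√((s⁺)²+2) x₀⁺ ≠ 0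 and ξ⁻(t*) = −√((s⁻)²−2) x₀⁻ ≠ 0. -/
/-!
Write `a = √(sp² + 2)`, `b = √(sm² - 2)` and `T = sp + a = -sm - b`. Both trajectories stay on a
line through the origin, with scalar amplitudes that factor as
`1 + sp t - t²/2 = (T - t)(t + a - sp)/2` and `1 + sm t + t²/2 = (T - t)(b - sm - t)/2`.
Since `a > |sp|` and `b > 0`, both amplitudes are positive on `[0, T)` and vanish at `T`.
Hence `x/|x|` is the constant unit vector `x₀` on `[0, T)` (`inv_norm_smul_of_pos`), the force is
constant, and the Hamiltonian systems reduce to differentiating quadratic polynomials.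
-/

open MeasureTheory Filter Complex Set
open scoped ENNReal

noncomputable section

/-- `ℝ²` as a Euclidean space. -/
abbrev E2 := EuclideanSpace ℝ (Fin 2)

/-- The plus-mode trajectory `x⁺(t) = (1 + s⁺t - t²/2) x₀⁺`. -/
noncomputable def xp (x₀p : E2) (sp t : ℝ) : E2 := (1 + sp * t - t ^ 2 / 2) • x₀p

/-- `ξ⁺(t) = (s⁺ - t) x₀⁺`. -/
noncomputable def xip (x₀p : E2) (sp t : ℝ) : E2 := (sp - t) • x₀p

/-- The minus-mode trajectory `x⁻(t) = (1 + s⁻t + t²/2) x₀⁻`. -/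
noncomputable def xm (x₀m : E2) (sm t : ℝ) : E2 := (1 + sm * t + t ^ 2 / 2) • x₀m

/-- `ξ⁻(t) = (s⁻ + t) x₀⁻`. -/
noncomputable def xim (x₀m : E2) (sm t : ℝ) : E2 := (sm + t) • x₀m

/-- A positive multiple of a unit vector normalizes to that vector. -/
lemma inv_norm_smul_of_pos {x : E2} (hx : ‖x‖ = 1) {c : ℝ} (hc : 0 < c) :
    ‖c • x‖⁻¹ • (c • x) = x := by
  rw [norm_smul, hx, mul_one, Real.norm_of_nonneg hc.le, smul_smul, inv_mul_cancel₀ hc.ne',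
    one_smul]

/-- the classical trajectories of the modes `±|x|` issued from
`(x₀^±, s^± x₀^±)` solve the Hamiltonian systems of `|ξ|²/2 ± |x|` away from the
crossing set `S = {0}`, and both reach `S` at the same time `t* > 0`, with nonzero
speeds. -/
theorem classical_trajectories_reach_crossing
    (x₀p x₀m : E2) (hxp : ‖x₀p‖ = 1) (hxm : ‖x₀m‖ = 1)
    (sp sm : ℝ) (hsm_neg : sm < 0) (hsm_sq : 2 < sm ^ 2)
    (hmatch : sp + Real.sqrt (sp ^ 2 + 2) = -sm - Real.sqrt (sm ^ 2 - 2)) :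
    0 < sp + Real.sqrt (sp ^ 2 + 2) ∧
    -- (i) initial conditions
    (xp x₀p sp 0 = x₀p ∧ xip x₀p sp 0 = sp • x₀p ∧
      xm x₀m sm 0 = x₀m ∧ xim x₀m sm 0 = sm • x₀m) ∧
    -- (ii) Hamiltonian ODEs before the crossing time, away from the crossing set
    (∀ t ∈ Set.Ico (0 : ℝ) (sp + Real.sqrt (sp ^ 2 + 2)),
      xp x₀p sp t ≠ 0 ∧ xm x₀m sm t ≠ 0 ∧
      HasDerivAt (fun r => xp x₀p sp r) (xip x₀p sp t) t ∧
      HasDerivAt (fun r => xip x₀p sp r) (-(‖xp x₀p sp t‖⁻¹ • xp x₀p sp t)) t ∧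
      HasDerivAt (fun r => xm x₀m sm r) (xim x₀m sm t) t ∧
      HasDerivAt (fun r => xim x₀m sm r) (‖xm x₀m sm t‖⁻¹ • xm x₀m sm t) t) ∧
    -- (iii) both trajectories reach the crossing set at time t*, with nonzero speeds
    (xp x₀p sp (sp + Real.sqrt (sp ^ 2 + 2)) = 0 ∧
      xm x₀m sm (sp + Real.sqrt (sp ^ 2 + 2)) = 0 ∧
      xip x₀p sp (sp + Real.sqrt (sp ^ 2 + 2)) = (-Real.sqrt (sp ^ 2 + 2)) • x₀p ∧
      xim x₀m sm (sp + Real.sqrt (sp ^ 2 + 2)) = (-Real.sqrt (sm ^ 2 - 2)) • x₀m ∧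
      xip x₀p sp (sp + Real.sqrt (sp ^ 2 + 2)) ≠ 0 ∧
      xim x₀m sm (sp + Real.sqrt (sp ^ 2 + 2)) ≠ 0) := by
  have hp0 : x₀p ≠ 0 := by rintro rfl; simp at hxp
  have hm0 : x₀m ≠ 0 := by rintro rfl; simp at hxm
  have ha : 0 < Real.sqrt (sp ^ 2 + 2) := Real.sqrt_pos.2 (by positivity)
  have hb : 0 < Real.sqrt (sm ^ 2 - 2) := Real.sqrt_pos.2 (by linarith)
  have ha2 : Real.sqrt (sp ^ 2 + 2) ^ 2 = sp ^ 2 + 2 := Real.sq_sqrt (by positivity)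
  have hb2 : Real.sqrt (sm ^ 2 - 2) ^ 2 = sm ^ 2 - 2 := Real.sq_sqrt (by linarith)
  set a := Real.sqrt (sp ^ 2 + 2)
  set b := Real.sqrt (sm ^ 2 - 2)
  have habs : |sp| < a := abs_lt_of_sq_lt_sq (by linarith) ha.le
  obtain ⟨h1, h2⟩ := abs_lt.1 habs
  have hT : 0 < sp + a := by linarith
  have facp : ∀ t : ℝ, 1 + sp * t - t ^ 2 / 2 = (sp + a - t) * (t + a - sp) / 2 := by
    intro t; linear_combination (-1 / 2) * ha2
  have facm : ∀ t : ℝ, 1 + sm * t + t ^ 2 / 2 = (sp + a - t) * (b - sm - t) / 2 := by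
    intro t; rw [hmatch]; linear_combination (1 / 2) * hb2
  have hxip : xip x₀p sp (sp + a) = (-a) • x₀p := by
    unfold xip; congr 1; ring
  have hxim : xim x₀m sm (sp + a) = (-b) • x₀m := by
    unfold xim; congr 1; linarith
  refine ⟨hT, ⟨by simp [xp], by simp [xip], by simp [xm], by simp [xim]⟩, ?_, ?_⟩
  · rintro t ⟨ht0, ht⟩
    have hcp : 0 < 1 + sp * t - t ^ 2 / 2 := by
      rw [facp]
      exact half_pos (mul_pos (by linarith) (by linarith))
    have hcm : 0 < 1 + sm * t + t ^ 2 / 2 := by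
      rw [facm]
      exact half_pos (mul_pos (by linarith) (by linarith))
    have hid := hasDerivAt_id' t
    refine ⟨smul_ne_zero hcp.ne' hp0, smul_ne_zero hcm.ne' hm0, ?_, ?_, ?_, ?_⟩
    · unfold xp xip
      refine HasDerivAt.smul_const ?_ x₀p
      exact (((hid.const_mul sp).const_add 1).sub ((hid.pow 2).div_const 2)).congr_deriv (by norm_num)
    · unfold xip xp
      rw [inv_norm_smul_of_pos hxp hcp]
      simpa using (hid.const_sub sp).smul_const x₀p
    · unfold xm xim
      refine HasDerivAt.smul_const ?_ x₀m
      exact (((hid.const_mul sm).const_add 1).add ((hid.pow 2).div_const 2)).congr_deriv (by norm_num)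
    · unfold xim xm
      rw [inv_norm_smul_of_pos hxm hcm]
      simpa using (hid.const_add sm).smul_const x₀m
  · refine ⟨?_, ?_, hxip, hxim, ?_, ?_⟩
    · simp [xp, facp]
    · simp [xm, facm]
    · rw [hxip]; exact smul_ne_zero (neg_ne_zero.2 ha.ne') hp0
    · rw [hxim]; exact smul_ne_zero (neg_ne_zero.2 hb.ne') hm0
end
end
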